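/- Let f ∈ ℂ[x,y] be a primitive homogeneous polynomial of degree d > 1 (f is not of the form g^r for r > 1). Then multiplication by f induces an isomorphism of ℂ[t]-modules between the reduced Brieskorn module B̄(f) = B(f)/B(f)_tors and C(f) = J_f/D_f; concretely, the map sending the class of g ∈ ℂ[x,y] modulo (D_f + torsion) to the class of f·g in J_f/D_f is a well-defined ℂ[t]-module isomorphism. -/

import Mathlib

open MvPolynomial

/-- The linear map `g ↦ f_x·∂g/∂y − f_y·∂g/∂x` whose range is `D_f`. -/
noncomputable def Dmap (f : MvPolynomial (Fin 2) ℂ) :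
    MvPolynomial (Fin 2) ℂ →ₗ[ℂ] MvPolynomial (Fin 2) ℂ where
  toFun g := pderiv 0 f * pderiv 1 g - pderiv 1 f * pderiv 0 g
  map_add' g h := by simp only [map_add]; ring
  map_smul' c g := by
    simp only [Derivation.map_smul, RingHom.id_apply, smul_sub, mul_smul_comm]

/-- `D_f` as a `ℂ`-subspace of `ℂ[x,y]`. -/
noncomputable def Dsub (f : MvPolynomial (Fin 2) ℂ) :
    Submodule ℂ (MvPolynomial (Fin 2) ℂ) :=
  LinearMap.range (Dmap f)

lemma mul_mem_Dsub (f : MvPolynomial (Fin 2) ℂ) {w : MvPolynomial (Fin 2) ℂ}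
    (hw : w ∈ Dsub f) : f * w ∈ Dsub f := by
  obtain ⟨g, rfl⟩ := hw
  refine ⟨f * g, ?_⟩
  simp only [Dmap, LinearMap.coe_mk, AddHom.coe_mk, pderiv_mul]
  ring

lemma pow_mul_mem_Dsub (f : MvPolynomial (Fin 2) ℂ) (k : ℕ) {w : MvPolynomial (Fin 2) ℂ}
    (hw : w ∈ Dsub f) : f ^ k * w ∈ Dsub f := by
  induction k with
  | zero => simpa using hw
  | succ n ih => rw [pow_succ, mul_comm (f ^ n) f, mul_assoc]; exact mul_mem_Dsub f ih

/-- The preimage in `ℂ[x,y]` of the torsion submodule `B(f)_tors ⊆ B(f) = ℂ[x,y]/D_f`,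
i.e. `D_f + torsion`: the set of `g` with `f^k·g ∈ D_f` for some `k`. -/
noncomputable def Tsub (f : MvPolynomial (Fin 2) ℂ) :
    Submodule ℂ (MvPolynomial (Fin 2) ℂ) where
  carrier := {g | ∃ k : ℕ, f ^ k * g ∈ Dsub f}
  zero_mem' := ⟨0, by simp⟩
  add_mem' := by
    rintro a b ⟨k, hk⟩ ⟨l, hl⟩
    refine ⟨k + l, ?_⟩
    have : f ^ (k + l) * (a + b) = f ^ l * (f ^ k * a) + f ^ k * (f ^ l * b) := by
      rw [pow_add]; ring
    rw [this]
    exact (Dsub f).add_mem (pow_mul_mem_Dsub f l hk) (pow_mul_mem_Dsub f k hl)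
  smul_mem' := by
    rintro c g ⟨k, hk⟩
    exact ⟨k, by rw [mul_smul_comm]; exact (Dsub f).smul_mem c hk⟩

lemma mulLeft_le_comap_Tsub (f : MvPolynomial (Fin 2) ℂ) :
    Tsub f ≤ (Tsub f).comap (LinearMap.mulLeft ℂ f) := by
  rintro g ⟨k, hk⟩
  refine ⟨k, ?_⟩
  have heq : f ^ k * (LinearMap.mulLeft ℂ f) g = f * (f ^ k * g) := by
    simp only [LinearMap.mulLeft_apply]; ring
  rw [heq]
  exact mul_mem_Dsub f hk

/-- Multiplication by `f` on the reduced Brieskorn module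
`B̄(f) = B(f)/B(f)_tors = ℂ[x,y]/Tsub f` (the action of `t`). -/
noncomputable def Bbarmul (f : MvPolynomial (Fin 2) ℂ) :
    (MvPolynomial (Fin 2) ℂ ⧸ Tsub f) →ₗ[ℂ] (MvPolynomial (Fin 2) ℂ ⧸ Tsub f) :=
  Submodule.mapQ (Tsub f) (Tsub f) (LinearMap.mulLeft ℂ f) (mulLeft_le_comap_Tsub f)

/-- The Jacobian ideal `J_f = (f_x, f_y)` regarded as a `ℂ`-subspace of `ℂ[x,y]`. -/
noncomputable def Jsub (f : MvPolynomial (Fin 2) ℂ) :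
    Submodule ℂ (MvPolynomial (Fin 2) ℂ) :=
  Submodule.restrictScalars ℂ
    (Ideal.span ({pderiv 0 f, pderiv 1 f} : Set (MvPolynomial (Fin 2) ℂ)))

lemma mulLeft_mem_Jsub (f : MvPolynomial (Fin 2) ℂ) :
    ∀ x ∈ Jsub f, f * x ∈ Jsub f := fun _ hx =>
  Ideal.mul_mem_left _ f hx

/-- Multiplication by `f` on `J_f`. -/
noncomputable def Jmul (f : MvPolynomial (Fin 2) ℂ) : Jsub f →ₗ[ℂ] Jsub f :=
  (LinearMap.mulLeft ℂ f).restrict (p := Jsub f) (q := Jsub f) (mulLeft_mem_Jsub f)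

lemma Jmul_le_comap (f : MvPolynomial (Fin 2) ℂ) :
    (Dsub f).comap (Jsub f).subtype ≤
      ((Dsub f).comap (Jsub f).subtype).comap (Jmul f) := by
  rintro ⟨x, hx⟩ hxD
  have : (Jsub f).subtype (Jmul f ⟨x, hx⟩) = f * x := rfl
  simp only [Submodule.mem_comap] at hxD ⊢
  rw [this]
  exact mul_mem_Dsub f hxD

/-- Multiplication by `f` on `C(f) = J_f/D_f` (the action of `t`). -/
noncomputable def Cmul (f : MvPolynomial (Fin 2) ℂ) :
    (Jsub f ⧸ (Dsub f).comap (Jsub f).subtype) →ₗ[ℂ]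
      (Jsub f ⧸ (Dsub f).comap (Jsub f).subtype) :=
  Submodule.mapQ _ _ (Jmul f) (Jmul_le_comap f)

lemma aux_totalDegree_pderiv (p : MvPolynomial (Fin 2) ℂ) (i : Fin 2) (h : pderiv i p ≠ 0) :
    (pderiv i p).totalDegree < p.totalDegree := by
  obtain ⟨m, hm, hmd⟩ : ∃ m ∈ (pderiv i p).support,
      (pderiv i p).totalDegree = m.sum fun _ e => e := by
    have := Finset.exists_mem_eq_sup (pderiv i p).support
      (Finset.nonempty_iff_ne_empty.mpr (by simpa using h)) (fun s => s.sum fun _ e => e)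
    simpa [totalDegree] using this
  rw [hmd]
  have h2 : coeff (m + Finsupp.single i 1) p ≠ 0 := by
    intro h0
    rw [mem_support_iff, coeff_pderiv, h0] at hm
    simp at hm
  have := le_totalDegree (mem_support_iff.mpr h2)
  rw [Finsupp.sum_add_index' (by simp) (by simp)] at this
  simp at this
  omega

lemma aux_pderiv_eq_zero (p : MvPolynomial (Fin 2) ℂ) (i : Fin 2)
    (h : p ∣ pderiv i p) : pderiv i p = 0 := by
  by_contra h0
  have h1 := aux_totalDegree_pderiv p i h0
  have h2 := totalDegree_le_of_dvd_of_isDomain h h0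
  omega

lemma aux_not_prime (p : MvPolynomial (Fin 2) ℂ) (hp : Prime p)
    (h : ∀ i, p ∣ pderiv i p) : False := by
  have hz : ∀ i, pderiv i p = 0 := fun i => aux_pderiv_eq_zero p i (h i)
  have hC : p = C (coeff 0 p) := by
    ext m
    rw [coeff_C]
    split_ifs with h0
    · rw [h0]
    · obtain ⟨i, hi⟩ : ∃ i, m i ≠ 0 := by
        by_contra hcon
        push Not at hcon
        exact h0 (by ext i; simp [hcon i])
      have h1 := congrArg (coeff (m - Finsupp.single i 1)) (hz i)
      rw [coeff_pderiv, Finsupp.sub_single_one_add hi, coeff_zero] at h1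
      rcases mul_eq_zero.mp h1 with h2 | h2
      · rwa [add_tsub_cancel_right] at h2
      · exfalso
        norm_cast at h2
  apply hp.not_isUnit
  have h3 : coeff 0 p ≠ 0 := by
    intro h4
    rw [h4] at hC
    exact hp.ne_zero (by simpa using hC)
  rw [hC]
  exact (IsUnit.mk0 _ h3).map C

lemma aux_pow (p : MvPolynomial (Fin 2) ℂ) (i : Fin 2) (n : ℕ) :
    p * pderiv i (p ^ n) = n * p ^ n * pderiv i p := by
  rw [pderiv_pow]
  cases n with
  | zero => simp
  | succ n => simp [pow_succ]; ring

lemma aux_prime_dvd (p u v z : MvPolynomial (Fin 2) ℂ) (hp : Prime p) (i : Fin 2)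
    (d e n k : ℕ) (hd : 0 < d) (hde : d < e) (hu : ¬ p ∣ u) (hv : ¬ p ∣ v)
    (h : (d : MvPolynomial (Fin 2) ℂ) * (p ^ (n + k + 1) * u) * pderiv i (p ^ n * v)
      - e * (p ^ n * v) * pderiv i (p ^ (n + k + 1) * u) = (p ^ (n + k + 1) * u) ^ 2 * z) :
    p ∣ pderiv i p := by
  have h1 := aux_pow p i n
  have h2 := aux_pow p i (n + k + 1)
  rw [pderiv_mul, pderiv_mul] at h
  have h3 : p ^ (2 * n + k + 1) * (((d : MvPolynomial (Fin 2) ℂ) * n - e * ((n + k + 1 : ℕ) :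
      MvPolynomial (Fin 2) ℂ)) * pderiv i p * u * v
      + p * (d * u * pderiv i v - e * v * pderiv i u)) =
      p ^ (2 * n + k + 1) * (p * (p ^ (k + 1) * u ^ 2 * z)) := by
    have e1 : p ^ (2 * n + k + 1) = p ^ (n + k + 1) * p ^ n := by ring
    have e2 : p ^ (2 * n + k + 1) * (p * (p ^ (k + 1) * u ^ 2 * z)) =
      p * ((p ^ (n + k + 1) * u) ^ 2 * z) := by ring
    rw [e2, e1]
    linear_combination p * h - (d : MvPolynomial (Fin 2) ℂ) * p ^ (n + k + 1) * u * v * h1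
      + (e : MvPolynomial (Fin 2) ℂ) * p ^ n * u * v * h2
  have h4 := mul_left_cancel₀ (pow_ne_zero _ hp.ne_zero) h3
  have h5 : p ∣ ((d : MvPolynomial (Fin 2) ℂ) * n - e * ((n + k + 1 : ℕ) :
      MvPolynomial (Fin 2) ℂ)) * pderiv i p * u * v :=
    ⟨(p ^ (k + 1) * u ^ 2 * z) - (d * u * pderiv i v - e * v * pderiv i u), by
      linear_combination h4⟩
  rcases hp.dvd_or_dvd h5 with h5 | h5
  swap
  · exact absurd h5 hv
  rcases hp.dvd_or_dvd h5 with h5 | h5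
  swap
  · exact absurd h5 hu
  rcases hp.dvd_or_dvd h5 with h5 | h5
  swap
  · exact h5
  exfalso
  apply hp.not_isUnit
  apply isUnit_of_dvd_unit h5
  have h6 : (d : MvPolynomial (Fin 2) ℂ) * (n : MvPolynomial (Fin 2) ℂ) - (e : MvPolynomial (Fin 2) ℂ) * ((n + k + 1 : ℕ) :
      MvPolynomial (Fin 2) ℂ) = C ((d : ℂ) * (n : ℂ) - (e : ℂ) * ((n + k + 1 : ℕ) : ℂ)) := by
    simp
  rw [h6]
  refine (IsUnit.mk0 _ ?_).map C
  intro h7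
  have h8 : d * n = e * (n + k + 1) := by
    have := sub_eq_zero.mp h7
    exact_mod_cast this
  nlinarith

lemma aux_dvd (f g : MvPolynomial (Fin 2) ℂ) (z : Fin 2 → MvPolynomial (Fin 2) ℂ)
    (d e : ℕ) (hd : 0 < d) (hde : d < e) (hf0 : f ≠ 0)
    (h : ∀ i, (d : MvPolynomial (Fin 2) ℂ) * f * pderiv i g
      - e * g * pderiv i f = f ^ 2 * z i) : f ∣ g := by
  by_cases hg0 : g = 0
  · simp [hg0]
  obtain ⟨f', g', c, hrel, hcf, hcg⟩ := UniqueFactorizationMonoid.exists_reduced_factors f hf0 g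
  by_cases hunit : IsUnit f'
  · rw [← hcf, ← hcg]
    exact mul_dvd_mul_left c hunit.dvd
  exfalso
  have hf'0 : f' ≠ 0 := by rintro rfl; simp at hcf; exact hf0 hcf.symm
  have hc0 : c ≠ 0 := by rintro rfl; simp at hcf; exact hf0 hcf.symm
  obtain ⟨p, hpi, hpf⟩ := WfDvdMonoid.exists_irreducible_factor hunit hf'0
  have hp : Prime p := UniqueFactorizationMonoid.irreducible_iff_prime.mp hpi
  have hpg : ¬ p ∣ g' := fun hpg => hp.not_isUnit (hrel hpf hpg)
  obtain ⟨n, c0, hc0', hcn⟩ := WfDvdMonoid.max_power_factor hc0 hpi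
  obtain ⟨k, u0, hu0', hfk⟩ := WfDvdMonoid.max_power_factor hf'0 hpi
  cases k with
  | zero => simp at hfk; exact hu0' (hfk ▸ hpf)
  | succ k =>
    have hu : ¬ p ∣ c0 * u0 := fun hh => (hp.dvd_or_dvd hh).elim hc0' hu0'
    have hv : ¬ p ∣ c0 * g' := fun hh => (hp.dvd_or_dvd hh).elim hc0' hpg
    have hfe : f = p ^ (n + k + 1) * (c0 * u0) := by rw [← hcf, hcn, hfk]; ring
    have hge : g = p ^ n * (c0 * g') := by rw [← hcg, hcn]; ring
    refine aux_not_prime p hp fun i =>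
      aux_prime_dvd p (c0 * u0) (c0 * g') (z i) hp i d e n k hd hde hu hv ?_
    rw [← hfe, ← hge]
    exact h i

lemma aux_euler (f : MvPolynomial (Fin 2) ℂ) (d : ℕ) (hf : f.IsHomogeneous d) :
    X 0 * pderiv 0 f + X 1 * pderiv 1 f = (d : MvPolynomial (Fin 2) ℂ) * f := by
  have := hf.sum_X_mul_pderiv
  simpa [Fin.sum_univ_two] using this

lemma Dmap_apply' (f g : MvPolynomial (Fin 2) ℂ) :
    Dmap f g = pderiv 0 f * pderiv 1 g - pderiv 1 f * pderiv 0 g := rfl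

lemma aux_hom (f g c : MvPolynomial (Fin 2) ℂ) (d e : ℕ) (hd : 0 < d) (hde : d < e)
    (hf0 : f ≠ 0) (hf : f.IsHomogeneous d) (hg : g.IsHomogeneous e)
    (h : f * (f * c) = Dmap f g) : f * c ∈ Dsub f := by
  rw [Dmap_apply'] at h
  have ef := aux_euler f d hf
  have eg := aux_euler g e hg
  obtain ⟨q, rfl⟩ : f ∣ g := by
    refine aux_dvd f g ![-(X 1 * c), X 0 * c] d e hd hde hf0 ?_
    intro i
    fin_cases i
    · simp
      linear_combination (X 1) * h - pderiv 0 g * ef + pderiv 0 f * eg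
    · simp
      linear_combination (-X 0) * h - pderiv 1 g * ef + pderiv 1 f * eg
  refine ⟨q, ?_⟩
  rw [Dmap_apply']
  apply mul_left_cancel₀ hf0
  rw [h, pderiv_mul, pderiv_mul]
  ring

lemma Dmap_hom (f g : MvPolynomial (Fin 2) ℂ) (d e : ℕ)
    (hf : f.IsHomogeneous d) (hg : g.IsHomogeneous e) :
    (Dmap f g).IsHomogeneous (d - 1 + (e - 1)) := by
  rw [Dmap_apply']
  exact (hf.pderiv.mul hg.pderiv).sub (hf.pderiv.mul hg.pderiv)

lemma comp_Dmap (f g : MvPolynomial (Fin 2) ℂ) (d n : ℕ) (hd : 0 < d) (hn : 0 < n)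
    (hf : f.IsHomogeneous d) :
    homogeneousComponent (d - 1 + n) (Dmap f g) = Dmap f (homogeneousComponent (n + 1) g) := by
  conv_lhs => rw [← sum_homogeneousComponent g]
  rw [map_sum, map_sum]
  rw [Finset.sum_congr rfl (fun i _ => homogeneousComponent_of_mem
    (Dmap_hom f _ d i hf (homogeneousComponent_isHomogeneous i g)))]
  by_cases hlt : n + 1 < g.totalDegree + 1
  · rw [Finset.sum_eq_single_of_mem (n + 1) (Finset.mem_range.mpr hlt)]
    · simp
    · intro b _ hb
      rw [if_neg (by omega)]
  · rw [homogeneousComponent_eq_zero (n + 1) g (by omega), map_zero]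
    apply Finset.sum_eq_zero
    intro i hi
    rw [Finset.mem_range] at hi
    rw [if_neg (by omega)]

lemma comp_mul (f c : MvPolynomial (Fin 2) ℂ) (d n : ℕ) (hf : f.IsHomogeneous d) :
    homogeneousComponent (d + n) (f * c) = f * homogeneousComponent n c := by
  conv_lhs => rw [← sum_homogeneousComponent c]
  rw [Finset.mul_sum, map_sum]
  rw [Finset.sum_congr rfl (fun i _ => homogeneousComponent_of_mem
    (hf.mul (homogeneousComponent_isHomogeneous i c)))]
  by_cases hlt : n < c.totalDegree + 1
  · rw [Finset.sum_eq_single_of_mem n (Finset.mem_range.mpr hlt)]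
    · simp
    · intro b _ hb
      rw [if_neg (by omega)]
  · rw [homogeneousComponent_eq_zero n c (by omega), mul_zero]
    apply Finset.sum_eq_zero
    intro i hi
    rw [Finset.mem_range] at hi
    rw [if_neg (by omega)]

lemma aux_tors (f c : MvPolynomial (Fin 2) ℂ) (d : ℕ) (hd : 0 < d)
    (hf0 : f ≠ 0) (hf : f.IsHomogeneous d)
    (h : f * (f * c) ∈ Dsub f) : f * c ∈ Dsub f := by
  obtain ⟨g, hg⟩ := h
  rw [← sum_homogeneousComponent c, Finset.mul_sum]
  refine Submodule.sum_mem _ fun n _ => ?_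
  refine aux_hom f (homogeneousComponent (d + n + 1 + 1) g) _ d (d + n + 1 + 1) hd (by omega) hf0 hf
    (homogeneousComponent_isHomogeneous _ g) ?_
  rw [← comp_Dmap f g d (d + n + 1) hd (by omega) hf, hg, ← comp_mul f c d n hf,
    ← comp_mul f _ d _ hf]
  congr 2
  omega

lemma aux_pow_tors (f c : MvPolynomial (Fin 2) ℂ) (d : ℕ) (hd : 0 < d)
    (hf0 : f ≠ 0) (hf : f.IsHomogeneous d) (k : ℕ)
    (h : f ^ k * c ∈ Dsub f) : f * c ∈ Dsub f := by
  induction k with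
  | zero => exact mul_mem_Dsub f (by simpa using h)
  | succ k ih =>
    cases k with
    | zero => simpa using h
    | succ k =>
      apply ih
      have := aux_tors f (f ^ k * c) d hd hf0 hf (by convert h using 1; ring)
      convert this using 1
      ring

lemma aux_smul (f w : MvPolynomial (Fin 2) ℂ) (m : ℕ) (S : Submodule ℂ (MvPolynomial (Fin 2) ℂ))
    (h : ((m + 1 : ℕ) : MvPolynomial (Fin 2) ℂ) * w ∈ S) : w ∈ S := by
  have h1 := S.smul_mem (((m + 1 : ℕ) : ℂ)⁻¹) h
  have h2 : ((m + 1 : ℕ) : ℂ) ≠ 0 := Nat.cast_ne_zero.mpr (by omega)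
  have h3 : ((m + 1 : ℕ) : MvPolynomial (Fin 2) ℂ) * w = ((m + 1 : ℕ) : ℂ) • w := by
    rw [smul_eq_C_mul]; simp
  rwa [h3, smul_smul, inv_mul_cancel₀ h2, one_smul] at h1

lemma aux_surj_mem (f : MvPolynomial (Fin 2) ℂ) (d : ℕ) (hf : f.IsHomogeneous d)
    (a : MvPolynomial (Fin 2) ℂ) :
    a * pderiv 0 f ∈ Dsub f ⊔ LinearMap.range (LinearMap.mulLeft ℂ f) ∧
    a * pderiv 1 f ∈ Dsub f ⊔ LinearMap.range (LinearMap.mulLeft ℂ f) := by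
  have ef := aux_euler f d hf
  constructor
  · rw [← sum_homogeneousComponent a, Finset.sum_mul]
    refine Submodule.sum_mem _ fun m _ => ?_
    apply aux_smul f _ m
    set b := homogeneousComponent m a
    have eb := aux_euler b m (homogeneousComponent_isHomogeneous m a)
    refine Submodule.mem_sup.mpr ⟨_, ⟨b * X 1, rfl⟩, _, ⟨(d : MvPolynomial (Fin 2) ℂ) * pderiv 0 b, rfl⟩, ?_⟩
    rw [Dmap_apply', pderiv_mul, pderiv_mul]
    simp
    linear_combination pderiv 0 f * eb - pderiv 0 b * ef
  · rw [← sum_homogeneousComponent a, Finset.sum_mul]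
    refine Submodule.sum_mem _ fun m _ => ?_
    apply aux_smul f _ m
    set b := homogeneousComponent m a
    have eb := aux_euler b m (homogeneousComponent_isHomogeneous m a)
    refine Submodule.mem_sup.mpr ⟨_, ⟨-(b * X 0), rfl⟩, _, ⟨(d : MvPolynomial (Fin 2) ℂ) * pderiv 1 b, rfl⟩, ?_⟩
    rw [Dmap_apply', map_neg, map_neg, pderiv_mul, pderiv_mul]
    simp
    linear_combination pderiv 1 f * eb - pderiv 1 b * ef

lemma aux_surj (f : MvPolynomial (Fin 2) ℂ) (d : ℕ) (hf : f.IsHomogeneous d)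
    (w : MvPolynomial (Fin 2) ℂ) (hw : w ∈ Jsub f) : ∃ c, f * c - w ∈ Dsub f := by
  have hw' : w ∈ Ideal.span ({pderiv 0 f, pderiv 1 f} : Set (MvPolynomial (Fin 2) ℂ)) := hw
  obtain ⟨a, b, rfl⟩ := Ideal.mem_span_pair.mp hw'
  have := Submodule.add_mem _ (aux_surj_mem f d hf a).1 (aux_surj_mem f d hf b).2
  obtain ⟨y, hy, z, ⟨c, rfl⟩, hz⟩ := Submodule.mem_sup.mp this
  refine ⟨c, ?_⟩
  rw [← hz]
  have : f * c - (y + (LinearMap.mulLeft ℂ f) c) = -y := by simp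
  rw [this]
  exact neg_mem hy

lemma aux_mem_J (f : MvPolynomial (Fin 2) ℂ) (d : ℕ) (hd : 0 < d) (hf : f.IsHomogeneous d)
    (g : MvPolynomial (Fin 2) ℂ) : f * g ∈ Jsub f := by
  obtain ⟨m, rfl⟩ : ∃ m, d = m + 1 := ⟨d - 1, by omega⟩
  apply aux_smul f _ m
  rw [← mul_assoc, ← aux_euler f _ hf]
  change _ ∈ Ideal.span ({pderiv 0 f, pderiv 1 f} : Set (MvPolynomial (Fin 2) ℂ))
  exact Ideal.mem_span_pair.mpr ⟨X 0 * g, X 1 * g, by ring⟩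

/-- For `f ∈ ℂ[x,y]` primitive homogeneous of degree `d > 1`,
multiplication by `f` induces an isomorphism of `ℂ[t]`-modules
`B̄(f) = B(f)/B(f)_tors ≅ C(f) = J_f/D_f`, sending the class of `g` modulo
`D_f + torsion` to the class of `f·g` in `J_f/D_f`. -/
theorem statement10 (f : MvPolynomial (Fin 2) ℂ) (d : ℕ) (hd : 1 < d)
    (hf : f.IsHomogeneous d)
    (hprim : ¬ ∃ (g : MvPolynomial (Fin 2) ℂ) (r : ℕ), 1 < r ∧ f = g ^ r) :
    (∀ g : MvPolynomial (Fin 2) ℂ, f * g ∈ Jsub f) ∧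
      ∃ e : Module.AEval' (Bbarmul f) ≃ₗ[Polynomial ℂ] Module.AEval' (Cmul f),
        ∀ (g : MvPolynomial (Fin 2) ℂ) (hg : f * g ∈ Jsub f),
          e (Module.AEval'.of (Bbarmul f) (Submodule.Quotient.mk g)) =
            Module.AEval'.of (Cmul f) (Submodule.Quotient.mk ⟨f * g, hg⟩) := by
  have hd0 : 0 < d := by omega
  have hf0 : f ≠ 0 := by
    rintro rfl
    exact hprim ⟨0, 2, by norm_num, by simp⟩
  have hJ := aux_mem_J f d hd0 hf
  refine ⟨hJ, ?_⟩
  let φ : MvPolynomial (Fin 2) ℂ →ₗ[ℂ] (Jsub f ⧸ (Dsub f).comap (Jsub f).subtype) :=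
    (Submodule.mkQ _).comp ((LinearMap.mulLeft ℂ f).codRestrict (Jsub f) hJ)
  have hφ : ∀ g, φ g = Submodule.Quotient.mk ⟨f * g, hJ g⟩ := fun g => rfl
  have hφ0 : ∀ g, φ g = 0 ↔ f * g ∈ Dsub f := by
    intro g
    rw [hφ, Submodule.Quotient.mk_eq_zero]
    rfl
  have hker : LinearMap.ker φ = Tsub f := by
    ext g
    rw [LinearMap.mem_ker, hφ0]
    constructor
    · intro h
      exact ⟨1, by simpa using h⟩
    · rintro ⟨k, hk⟩
      exact aux_pow_tors f g d hd0 hf0 hf k hk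
  have hsurj : Function.Surjective φ := by
    intro q
    obtain ⟨⟨w, hw⟩, rfl⟩ := Submodule.Quotient.mk_surjective _ q
    obtain ⟨c, hc⟩ := aux_surj f d hf w hw
    refine ⟨c, ?_⟩
    rw [hφ, Submodule.Quotient.eq]
    exact hc
  let E : (MvPolynomial (Fin 2) ℂ ⧸ Tsub f) ≃ₗ[ℂ] (Jsub f ⧸ (Dsub f).comap (Jsub f).subtype) :=
    (Submodule.quotEquivOfEq _ _ hker.symm).trans (φ.quotKerEquivOfSurjective hsurj)
  have hE : ∀ g, E (Submodule.Quotient.mk g) = φ g := fun g => rfl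
  refine ⟨LinearEquiv.ofAEval _ (E.trans (Module.AEval'.of (Cmul f))) ?_, ?_⟩
  · intro m
    obtain ⟨g, rfl⟩ := Submodule.Quotient.mk_surjective _ m
    change Module.AEval'.of (Cmul f) (φ (f * g)) =
      (Polynomial.X : Polynomial ℂ) • Module.AEval'.of (Cmul f) (φ g)
    rw [Module.AEval'.X_smul_of]
    rfl
  · intro g hg
    rfl
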